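/- For all ξ, δ, κ, λ ∈ ℂ such that ξ, δ, κ, λ, ξ+δ, κ−λ, λ−κ, ξ+κ, δ+λ, ξ+δ+κ, ξ+δ+λ, ξ+κ−λ, δ+λ−κ ∉ Λ, the Lamé function satisfies the addition formula Ψ_ξ(κ)·Ψ_δ(λ) = e^{η_δ(ξ)·κ}·Ψ_{ξ+δ}(κ)·Ψ_δ(λ−κ) + e^{η_δ(ξ)·λ}·Ψ_ξ(κ−λ)·Ψ_{ξ+δ}(λ). -/

import Mathlib

open scoped BigOperators

noncomputable section

/-- A period lattice in `ℂ` spanned by two `ℝ`-independent periods. -/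
structure EllLattice where
  ω₁ : ℂ
  ω₂ : ℂ
  indep : ∀ a b : ℝ, a • ω₁ + b • ω₂ = 0 → a = 0 ∧ b = 0

namespace EllLattice

/-- Membership in the lattice `Λ = ℤω₁ + ℤω₂`. -/
def mem (L : EllLattice) (z : ℂ) : Prop := ∃ m n : ℤ, z = m • L.ω₁ + n • L.ω₂

/-- The lattice point with integer coordinates `p = (m, n)`. -/
def per (L : EllLattice) (p : ℤ × ℤ) : ℂ := p.1 • L.ω₁ + p.2 • L.ω₂

/-- The Weierstrass sigma function associated to the lattice, defined by its
Hadamard product over the nonzero lattice points. -/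
def sigma (L : EllLattice) (z : ℂ) : ℂ :=
  z * ∏' p : {p : ℤ × ℤ // p ≠ 0},
      ((1 - z / L.per p.1) *
        Complex.exp (z / L.per p.1 + z ^ 2 / (2 * (L.per p.1) ^ 2)))

/-- The Weierstrass zeta function `ζ = σ′/σ`. -/
def zeta (L : EllLattice) (z : ℂ) : ℂ := deriv L.sigma z / L.sigma z

/-- The Weierstrass `℘`-function `℘ = −ζ′`. -/
def wp (L : EllLattice) (z : ℂ) : ℂ := - deriv L.zeta z

/-- `Φ_ξ(κ) = σ(ξ+κ)/(σ(ξ)σ(κ))`. -/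
def Phi (L : EllLattice) (ξ κ : ℂ) : ℂ := L.sigma (ξ + κ) / (L.sigma ξ * L.sigma κ)

/-- The Lamé function `Ψ_ξ(κ) = Φ_ξ(κ)·e^{−ζ(ξ)κ}`. -/
def Psi (L : EllLattice) (ξ κ : ℂ) : ℂ := L.Phi ξ κ * Complex.exp (-(L.zeta ξ) * κ)

/-- `η_δ(ξ) = ζ(ξ+δ) − ζ(ξ) − ζ(δ)`. -/
def eta (L : EllLattice) (δ ξ : ℂ) : ℂ := L.zeta (ξ + δ) - L.zeta ξ - L.zeta δ

/-- `χ_{α,β}(ξ) = ζ(α) + ζ(β) + ζ(ξ) − ζ(ξ+α+β)`. -/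
def chi (L : EllLattice) (α β ξ : ℂ) : ℂ :=
  L.zeta α + L.zeta β + L.zeta ξ - L.zeta (ξ + α + β)

end EllLattice

/-!
The logarithmic derivative `ζ` of `σ` satisfies `ζ' = -℘`, so `ζ(z + w) - ζ(z)` is constant for
every period `w`, and `σ(z + w) = C exp(η z) σ(z)`. Put `[a b] = σ(a + b) σ(a - b)`. As a function
of `a`, each of `[a b]`, `[a c]`, `[a d]` is multiplied by the same factor when a period is added,
hence so is `[a b][c d] + [a c][d b] + [a d][b c]`. This function vanishes at `a = ±d`, hence is an
entire multiple of `[a d]`, with a quotient that is constant by Liouville's theorem; evaluating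
at `a = b` shows that the constant is `0`. Degenerate values of `d` are covered by the identity
theorem. At suitable half sums this three-term identity is the addition formula for `Φ`, and in
the formula for `Ψ` the exponential factors of the three terms agree.
-/

open Complex Filter Topology

/-- The Weierstrass elementary factor `E₂(t)`, so that
`σ(z) = z ∏_{l ≠ 0} E₂(z / l)`. -/
def weierstrassFactor (t : ℂ) : ℂ := (1 - t) * exp (t + t ^ 2 / 2)

@[simp]
lemma weierstrassFactor_zero : weierstrassFactor 0 = 1 := by simp [weierstrassFactor]

lemma weierstrassFactor_eq_zero_iff {t : ℂ} : weierstrassFactor t = 0 ↔ t = 1 := by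
  rw [weierstrassFactor, mul_eq_zero, or_iff_left (exp_ne_zero _), sub_eq_zero, eq_comm]

lemma hasDerivAt_weierstrassFactor (t : ℂ) :
    HasDerivAt weierstrassFactor (-t ^ 2 * exp (t + t ^ 2 / 2)) t := by
  have hlin : HasDerivAt (fun t : ℂ ↦ 1 - t) (-1) t := (hasDerivAt_id t).const_sub 1
  have hexp : HasDerivAt (fun t : ℂ ↦ exp (t + t ^ 2 / 2)) (exp (t + t ^ 2 / 2) * (1 + t)) t := by
    simpa using ((hasDerivAt_id t).add ((hasDerivAt_pow 2 t).div_const 2)).cexp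
  exact (hlin.mul hexp).congr_deriv (by ring)

@[fun_prop]
lemma differentiable_weierstrassFactor : Differentiable ℂ weierstrassFactor :=
  fun t ↦ (hasDerivAt_weierstrassFactor t).differentiableAt

lemma norm_weierstrassFactor_sub_one_le {t : ℂ} (ht : ‖t‖ ≤ 1) :
    ‖weierstrassFactor t - 1‖ ≤ Real.exp 2 * ‖t‖ ^ 3 := by
  have norm_deriv_le : ∀ s ∈ Metric.closedBall (0 : ℂ) ‖t‖,
      ‖-s ^ 2 * exp (s + s ^ 2 / 2)‖ ≤ ‖t‖ ^ 2 * Real.exp 2 := by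
    intro s hs
    have hst : ‖s‖ ≤ ‖t‖ := by simpa using hs
    have hs2 : ‖s + s ^ 2 / 2‖ ≤ 2 := by
      calc ‖s + s ^ 2 / 2‖ ≤ ‖s‖ + ‖s ^ 2 / 2‖ := norm_add_le _ _
        _ = ‖s‖ + ‖s‖ ^ 2 / 2 := by simp
        _ ≤ 2 := by nlinarith [norm_nonneg s]
    rw [norm_mul, norm_neg, norm_pow]
    gcongr
    exact (norm_exp_le_exp_norm _).trans (Real.exp_le_exp.mpr hs2)
  have := (convex_closedBall (0 : ℂ) ‖t‖).norm_image_sub_le_of_norm_hasDerivWithin_le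
    (fun s _ ↦ (hasDerivAt_weierstrassFactor s).hasDerivWithinAt) norm_deriv_le
    (Metric.mem_closedBall_self (norm_nonneg t)) (show t ∈ Metric.closedBall 0 ‖t‖ by simp)
  calc ‖weierstrassFactor t - 1‖ ≤ ‖t‖ ^ 2 * Real.exp 2 * ‖t‖ := by simpa using this
    _ = Real.exp 2 * ‖t‖ ^ 3 := by ring

lemma norm_weierstrassFactor_div_sub_one_le {z w : ℂ} {R : ℝ} (hR : 0 < R) (hz : ‖z‖ ≤ R)
    (hw : R ≤ ‖w‖) : ‖weierstrassFactor (z / w) - 1‖ ≤ Real.exp 2 * R ^ 3 * ‖w‖⁻¹ ^ 3 := by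
  have hdiv : ‖z / w‖ ≤ R * ‖w‖⁻¹ := by
    rw [norm_div, div_eq_mul_inv]
    gcongr
  have hle_one : R * ‖w‖⁻¹ ≤ 1 := by
    rwa [← div_eq_mul_inv, div_le_one (hR.trans_le hw)]
  calc ‖weierstrassFactor (z / w) - 1‖ ≤ Real.exp 2 * ‖z / w‖ ^ 3 :=
        norm_weierstrassFactor_sub_one_le (hdiv.trans hle_one)
    _ ≤ Real.exp 2 * (R * ‖w‖⁻¹) ^ 3 := by gcongr
    _ = Real.exp 2 * R ^ 3 * ‖w‖⁻¹ ^ 3 := by ring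

lemma logDeriv_weierstrassFactor (t : ℂ) : logDeriv weierstrassFactor t = -t ^ 2 / (1 - t) := by
  rw [logDeriv_apply, (hasDerivAt_weierstrassFactor t).deriv, weierstrassFactor,
    mul_div_mul_right _ _ (exp_ne_zero _)]

lemma logDeriv_weierstrassFactor_div (w z : ℂ) :
    logDeriv (fun z ↦ weierstrassFactor (z / w)) z = z ^ 2 / (w ^ 2 * (z - w)) := by
  rcases eq_or_ne w 0 with rfl | hw
  · simp
  have hcomp := logDeriv_comp (x := z) (differentiable_weierstrassFactor (z / w))
    (differentiableAt_id.div_const w)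
  rw [Function.comp_def, logDeriv_weierstrassFactor] at hcomp
  simp only [id, deriv_div_const, deriv_id''] at hcomp
  rw [hcomp, one_sub_div hw, ← neg_sub w z]
  field_simp

lemma deriv_logDeriv_weierstrassFactor_div {w z : ℂ} (hzw : z ≠ w) :
    deriv (logDeriv fun z ↦ weierstrassFactor (z / w)) z =
      -(if w = 0 then 0 else 1 / (z - w) ^ 2 - 1 / w ^ 2) := by
  rw [funext (logDeriv_weierstrassFactor_div w)]
  split_ifs with hw
  · simp [hw]
  have hzw' : z - w ≠ 0 := sub_ne_zero.mpr hzw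
  have hden : HasDerivAt (fun z ↦ w ^ 2 * (z - w)) (w ^ 2) z := by
    simpa using ((hasDerivAt_id z).sub_const w).const_mul (w ^ 2)
  have hquot := (hasDerivAt_pow 2 z).fun_div hden (by positivity)
  rw [hquot.deriv]
  field_simp
  ring

lemma deriv_logDeriv {𝕜 : Type*} [NontriviallyNormedField 𝕜] {f : 𝕜 → 𝕜} {x : 𝕜}
    (hf : DifferentiableAt 𝕜 f x) (hf' : DifferentiableAt 𝕜 (deriv f) x) (hx : f x ≠ 0) :
    deriv (logDeriv f) x = (deriv (deriv f) x * f x - deriv f x * deriv f x) / f x ^ 2 :=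
  deriv_div hf' hf hx

lemma tendsto_deriv_logDeriv {ι : Type*} {φ : Filter ι} [φ.NeBot] {f : ι → ℂ → ℂ} {F : ℂ → ℂ}
    {s : Set ℂ} (hs : IsOpen s) (hF : TendstoLocallyUniformlyOn f F φ s)
    (hf : ∀ᶠ i in φ, DifferentiableOn ℂ (f i) s) {x : ℂ} (hx : x ∈ s) (hFx : F x ≠ 0) :
    Tendsto (fun i ↦ deriv (logDeriv (f i)) x) φ (𝓝 (deriv (logDeriv F) x)) := by
  have hF' : TendstoLocallyUniformlyOn (fun i ↦ deriv (f i)) (deriv F) φ s := hF.deriv hf hs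
  have hf' : ∀ᶠ i in φ, DifferentiableOn ℂ (deriv (f i)) s := hf.mono fun _ h ↦ h.deriv hs
  have hF'' : Tendsto (fun i ↦ deriv (deriv (f i)) x) φ (𝓝 (deriv (deriv F) x)) :=
    (hF'.deriv hf' hs).tendsto_at hx
  have hs_nhds := hs.mem_nhds hx
  have hFd := hF.differentiableOn hf hs
  rw [deriv_logDeriv (hFd.differentiableAt hs_nhds) ((hFd.deriv hs).differentiableAt hs_nhds) hFx]
  have hlim := hF.tendsto_at hx
  have hlim' := hF'.tendsto_at hx
  refine (((hF''.mul hlim).sub (hlim'.mul hlim')).div (hlim.pow 2)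
    (pow_ne_zero 2 hFx)).congr' ?_
  filter_upwards [hf, hlim.eventually_ne hFx] with i hfi hfx
  exact (deriv_logDeriv (hfi.differentiableAt hs_nhds)
    ((hfi.deriv hs).differentiableAt hs_nhds) hfx).symm

lemma hasSum_deriv_logDeriv {ι : Type*} {f : ι → ℂ → ℂ} {F : ℂ → ℂ} {s : Set ℂ} (hs : IsOpen s)
    (hF : HasProdLocallyUniformlyOn f F s) (hf : ∀ i, DifferentiableOn ℂ (f i) s) {x : ℂ}
    (hx : x ∈ s) (hfx : ∀ i, f i x ≠ 0) (hFx : F x ≠ 0) :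
    HasSum (fun i ↦ deriv (logDeriv (f i)) x) (deriv (logDeriv F) x) := by
  have hprod (t : Finset ι) : DifferentiableOn ℂ (fun z ↦ ∏ i ∈ t, f i z) s :=
    .fun_finsetProd fun i _ ↦ hf i
  refine (tendsto_deriv_logDeriv hs hF (.of_forall hprod) hx hFx).congr fun t ↦ ?_
  have hfi (i : ι) : DifferentiableAt ℂ (f i) x := (hf i).differentiableAt (hs.mem_nhds hx)
  have hsum : logDeriv (fun z ↦ ∏ i ∈ t, f i z) =ᶠ[𝓝 x] fun z ↦ ∑ i ∈ t, logDeriv (f i) z := by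
    filter_upwards [hs.mem_nhds hx, (eventually_all_finset t).mpr fun i _ ↦
      (hfi i).continuousAt.eventually_ne (hfx i)] with z hz hne
    exact logDeriv_prod hne fun i _ ↦ (hf i).differentiableAt (hs.mem_nhds hz)
  rw [hsum.deriv_eq, deriv_fun_sum]
  exact fun i _ ↦ (((hf i).deriv hs).differentiableAt (hs.mem_nhds hx)).div (hfi i) (hfx i)

/- Near a common zero `p`, the quotient is the quotient of the two slopes `dslope · p`. -/
lemma exists_differentiable_eq_mul_of_simple_zeros {f g : ℂ → ℂ} (hf : Differentiable ℂ f)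
    (hg : Differentiable ℂ g) (hzero : ∀ p, g p = 0 → f p = 0 ∧ deriv g p ≠ 0) :
    ∃ q : ℂ → ℂ, Differentiable ℂ q ∧ ∀ z, f z = q z * g z := by
  refine ⟨fun z ↦ if g z = 0 then deriv f z / deriv g z else f z / g z, fun p ↦ ?_, fun z ↦ ?_⟩
  · by_cases hp : g p = 0
    · obtain ⟨hfp, hgp⟩ := hzero p hp
      have dslope_differentiableAt {h : ℂ → ℂ} (hh : Differentiable ℂ h) :
          DifferentiableAt ℂ (dslope h p) p :=
        ((differentiableOn_dslope univ_mem).mpr hh.differentiableOn).differentiableAt univ_mem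
      have hslope : dslope g p p ≠ 0 := by rwa [dslope_same]
      refine ((dslope_differentiableAt hf).div (dslope_differentiableAt hg)
        hslope).congr_of_eventuallyEq ?_
      filter_upwards [(dslope_differentiableAt hg).continuousAt.eventually_ne hslope] with z hz
      rcases eq_or_ne z p with rfl | hzp
      · simp [hp]
      have hzp' : z - p ≠ 0 := sub_ne_zero.mpr hzp
      rw [dslope_of_ne _ hzp, slope_def_field, hp, sub_zero] at hz
      have hgz : g z ≠ 0 := fun h ↦ hz (by simp [h])
      simp only [Pi.div_apply, dslope_of_ne _ hzp, slope_def_field, hfp, hp, sub_zero, if_neg hgz]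
      field_simp
    · refine ((hf p).div (hg p) hp).congr_of_eventuallyEq ?_
      filter_upwards [(hg p).continuousAt.eventually_ne hp] with z hz
      simp [hz]
  · by_cases hz : g z = 0
    · simp [hz, (hzero z hz).1]
    · simp [hz]

lemma eq_zero_or_eq_zero_of_differentiable_mul_eq_zero {f g : ℂ → ℂ} (hf : Differentiable ℂ f)
    (hg : Differentiable ℂ g) (hfg : ∀ z, f z * g z = 0) : (∀ z, f z = 0) ∨ ∀ z, g z = 0 := by
  simpa using AnalyticOnNhd.eq_zero_or_eq_zero_of_mul_eq_zero (U := Set.univ)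
    (fun z _ ↦ hf.analyticAt z) (fun z _ ↦ hg.analyticAt z) (fun z _ ↦ hfg z) isPreconnected_univ

namespace EllLattice

/-- The period pair `(ω₁, ω₂)`, which gives access to Mathlib's `℘`. -/
def toPeriodPair (L : EllLattice) : PeriodPair where
  ω₁ := L.ω₁
  ω₂ := L.ω₂
  indep := LinearIndependent.pair_iff.mpr L.indep

/-- The lattice `Λ` as a `ℤ`-submodule of `ℂ`. -/
abbrev lattice (L : EllLattice) : Submodule ℤ ℂ := L.toPeriodPair.lattice

lemma mem_lattice_iff {L : EllLattice} {z : ℂ} : z ∈ L.lattice ↔ L.mem z := by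
  simp [PeriodPair.mem_lattice, mem, toPeriodPair, eq_comm]

variable (L : EllLattice) {f g q : ℂ → ℂ} {z w : ℂ}

lemma isOpen_compl_lattice : IsOpen (L.lattice : Set ℂ)ᶜ :=
  L.toPeriodPair.isClosed_lattice.isOpen_compl

lemma isPreconnected_compl_lattice : IsPreconnected (L.lattice : Set ℂ)ᶜ := by
  have : Countable L.lattice :=
    L.toPeriodPair.latticeEquivProd.toEquiv.countable_iff.mpr inferInstance
  exact ((Set.to_countable (L.lattice : Set ℂ)).isConnected_compl_of_one_lt_rank
    (by simp)).isPreconnected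

lemma eventually_le_norm_lattice (R : ℝ) : ∀ᶠ l : L.lattice in cofinite, R ≤ ‖(l : ℂ)‖ := by
  have := tendsto_norm_cocompact_atTop (E := L.lattice)
  rw [cocompact_eq_cofinite] at this
  exact this.eventually_ge_atTop R

/-- The product of the elementary factors `E₂(z / l)`. The index `l = 0` contributes
`E₂(z / 0) = E₂(0) = 1`, so it need not be excluded. -/
def sigmaProd (z : ℂ) : ℂ := ∏' l : L.lattice, weierstrassFactor (z / l)

lemma sigma_eq_mul_sigmaProd (z : ℂ) : L.sigma z = z * L.sigmaProd z := by
  have coe_symm (p : ℤ × ℤ) : (L.toPeriodPair.latticeEquivProd.symm.toEquiv p : ℂ) = L.per p :=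
    (L.toPeriodPair.latticeEquiv_symm_apply p).trans (by simp [per, toPeriodPair])
  have support_subset : Function.mulSupport (fun p ↦ weierstrassFactor (z / L.per p)) ⊆
      {p | p ≠ 0} := by
    rintro p hp rfl
    exact hp (by simp [per])
  rw [sigma, sigmaProd, ← L.toPeriodPair.latticeEquivProd.symm.toEquiv.tprod_eq]
  simp only [coe_symm]
  rw [← tprod_subtype_eq_of_mulSupport_subset support_subset]
  simp only [weierstrassFactor, div_pow, div_div, mul_comm]
  rfl

lemma summable_const_mul_norm_inv_pow_three (C : ℝ) :
    Summable fun l : L.lattice ↦ C * ‖(l : ℂ)‖⁻¹ ^ 3 :=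
  (ZLattice.summable_norm_pow_inv L.lattice 3 (by simp)).mul_left C

lemma hasProdLocallyUniformly_sigmaProd :
    HasProdLocallyUniformly (fun (l : L.lattice) z ↦ weierstrassFactor (z / l)) L.sigmaProd := by
  refine hasProdLocallyUniformly_of_forall_compact fun K hK ↦ ?_
  obtain ⟨R, hR, hKR⟩ := hK.isBounded.exists_pos_norm_le
  have := Summable.hasProdUniformlyOn_one_add (R := ℂ)
    (f := fun (l : L.lattice) z ↦ weierstrassFactor (z / l) - 1) hK
    (L.summable_const_mul_norm_inv_pow_three (Real.exp 2 * R ^ 3))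
    ((L.eventually_le_norm_lattice R).mono fun l hl z hz ↦
      norm_weierstrassFactor_div_sub_one_le hR (hKR z hz) hl)
    (fun l ↦ Continuous.continuousOn (Differentiable.continuous (𝕜 := ℂ) (by fun_prop)))
  simp only [add_sub_cancel] at this
  exact this

lemma differentiable_sigmaProd : Differentiable ℂ L.sigmaProd := by
  rw [← differentiableOn_univ]
  refine (L.hasProdLocallyUniformly_sigmaProd.hasProdLocallyUniformlyOn
    (s := Set.univ)).differentiableOn (.of_forall fun t ↦ ?_) isOpen_univ
  exact .fun_finsetProd fun l _ ↦ Differentiable.differentiableOn (by fun_prop)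

@[fun_prop]
lemma differentiable_sigma : Differentiable ℂ L.sigma := by
  rw [funext L.sigma_eq_mul_sigmaProd]
  exact differentiable_id.mul L.differentiable_sigmaProd

variable {L}

lemma weierstrassFactor_div_ne_zero (hz : z ∉ L.lattice) (l : L.lattice) :
    weierstrassFactor (z / l) ≠ 0 := by
  rw [Ne, weierstrassFactor_eq_zero_iff]
  intro h
  rw [eq_of_div_eq_one h] at hz
  exact hz l.2

lemma sigmaProd_ne_zero (hz : z ∉ L.lattice) : L.sigmaProd z ≠ 0 := by
  have hbound := (L.eventually_le_norm_lattice (‖z‖ + 1)).mono fun l hl ↦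
    norm_weierstrassFactor_div_sub_one_le (by positivity) (le_add_of_nonneg_right zero_le_one) hl
  have := tprod_one_add_ne_zero_of_summable (R := ℂ)
    (f := fun l : L.lattice ↦ weierstrassFactor (z / l) - 1)
    (by simpa using weierstrassFactor_div_ne_zero hz)
    (.of_norm_bounded_eventually (L.summable_const_mul_norm_inv_pow_three _)
      (by simpa using hbound))
  simpa [sigmaProd] using this

lemma sigma_eq_zero_iff : L.sigma z = 0 ↔ z ∈ L.lattice := by
  rw [sigma_eq_mul_sigmaProd, mul_eq_zero]
  refine ⟨fun h ↦ ?_, fun hz ↦ or_iff_not_imp_left.mpr fun hz0 ↦ ?_⟩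
  · contrapose! h
    exact ⟨fun h0 ↦ h (h0 ▸ zero_mem _), sigmaProd_ne_zero h⟩
  · exact tprod_of_exists_eq_zero ⟨⟨z, hz⟩, weierstrassFactor_eq_zero_iff.mpr (div_self hz0)⟩

lemma sigma_ne_zero (hz : z ∉ L.lattice) : L.sigma z ≠ 0 := sigma_eq_zero_iff.not.mpr hz

variable (L)

@[simp]
lemma sigma_zero : L.sigma 0 = 0 := sigma_eq_zero_iff.mpr (zero_mem _)

lemma sigma_neg (z : ℂ) : L.sigma (-z) = -L.sigma z := by
  have hprod : L.sigmaProd (-z) = L.sigmaProd z := by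
    rw [sigmaProd, sigmaProd, ← (Equiv.neg L.lattice).tprod_eq]
    simp [neg_div_neg_eq]
  rw [sigma_eq_mul_sigmaProd, sigma_eq_mul_sigmaProd, hprod, neg_mul]

lemma sigma_sub_rev (a b : ℂ) : L.sigma (a - b) = -L.sigma (b - a) := by
  rw [← sigma_neg, neg_sub]

lemma deriv_sigma_zero : deriv L.sigma 0 = 1 := by
  rw [funext L.sigma_eq_mul_sigmaProd,
    ((hasDerivAt_id' 0).fun_mul (L.differentiable_sigmaProd 0).hasDerivAt).deriv]
  simp [sigmaProd]

variable {L}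

lemma logDeriv_sigma (hz : z ∉ L.lattice) :
    logDeriv L.sigma z = 1 / z + logDeriv L.sigmaProd z := by
  have hz0 : z ≠ 0 := fun h ↦ hz (h ▸ zero_mem _)
  rw [funext L.sigma_eq_mul_sigmaProd, logDeriv_mul (f := fun z ↦ z) z hz0
    (sigmaProd_ne_zero hz) differentiableAt_id (L.differentiable_sigmaProd z), logDeriv_id']

lemma deriv_logDeriv_sigmaProd (hz : z ∉ L.lattice) :
    deriv (logDeriv L.sigmaProd) z = -L.toPeriodPair.weierstrassPExcept 0 z := by
  have hsum := hasSum_deriv_logDeriv isOpen_univ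
    L.hasProdLocallyUniformly_sigmaProd.hasProdLocallyUniformlyOn
    (fun l ↦ Differentiable.differentiableOn (by fun_prop)) (Set.mem_univ z)
    (weierstrassFactor_div_ne_zero hz) (sigmaProd_ne_zero hz)
  have hne (l : L.lattice) : z ≠ l := fun h ↦ hz (h ▸ l.2)
  simp only [deriv_logDeriv_weierstrassFactor_div (hne _)] at hsum
  exact hsum.unique (L.toPeriodPair.hasSum_weierstrassPExcept 0 z).neg

lemma differentiableAt_zeta (hz : z ∉ L.lattice) : DifferentiableAt ℂ L.zeta z :=
  (L.differentiable_sigma.deriv z).div (L.differentiable_sigma z) (sigma_ne_zero hz)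

lemma deriv_zeta (hz : z ∉ L.lattice) : deriv L.zeta z = -L.toPeriodPair.weierstrassP z := by
  have hzeta : L.zeta =ᶠ[𝓝 z] fun z ↦ 1 / z + logDeriv L.sigmaProd z := by
    filter_upwards [L.isOpen_compl_lattice.mem_nhds hz] with u hu using logDeriv_sigma hu
  have hz0 : z ≠ 0 := fun h ↦ hz (h ▸ zero_mem _)
  have hprod : DifferentiableAt ℂ (logDeriv L.sigmaProd) z :=
    (L.differentiable_sigmaProd.deriv z).div (L.differentiable_sigmaProd z) (sigmaProd_ne_zero hz)
  have hexcept : L.toPeriodPair.weierstrassPExcept 0 z =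
      L.toPeriodPair.weierstrassP z - 1 / z ^ 2 := by
    simpa [← sub_eq_add_neg] using L.toPeriodPair.weierstrassPExcept_def 0 z
  rw [hzeta.deriv_eq, deriv_fun_add (by fun_prop (disch := assumption)) hprod,
    deriv_logDeriv_sigmaProd hz, hexcept, deriv_const_div_id]
  ring

lemma add_notMem_lattice (hw : w ∈ L.lattice) (hz : z ∉ L.lattice) : z + w ∉ L.lattice :=
  fun h ↦ hz ((add_mem_cancel_right hw).mp h)

lemma exists_zeta_add_eq (hw : w ∈ L.lattice) :
    ∃ η, ∀ z ∉ L.lattice, L.zeta (z + w) = L.zeta z + η := by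
  refine L.isOpen_compl_lattice.exists_eq_add_of_deriv_eq L.isPreconnected_compl_lattice
    (f := fun z ↦ L.zeta (z + w)) (fun z hz ↦ ?_)
    (fun z hz ↦ (differentiableAt_zeta hz).differentiableWithinAt) fun z hz ↦ ?_
  · exact (differentiableAt_comp_add_const.mpr
      (differentiableAt_zeta (add_notMem_lattice hw hz))).differentiableWithinAt
  · rw [deriv_comp_add_const, deriv_zeta hz, deriv_zeta (add_notMem_lattice hw hz)]
    exact congrArg Neg.neg (L.toPeriodPair.weierstrassP_add_coe z ⟨w, hw⟩)

lemma exists_sigma_add_eq (hw : w ∈ L.lattice) :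
    ∃ η C : ℂ, C ≠ 0 ∧ ∀ z, L.sigma (z + w) = C * exp (η * z) * L.sigma z := by
  obtain ⟨η, hη⟩ := exists_zeta_add_eq hw
  have hlog : Set.EqOn (logDeriv fun z ↦ L.sigma (z + w))
      (logDeriv fun z ↦ exp (η * z) * L.sigma z) (L.lattice : Set ℂ)ᶜ := by
    intro z hz
    have hexp : HasDerivAt (fun z ↦ exp (η * z)) (exp (η * z) * η) z := by
      simpa using ((hasDerivAt_id z).const_mul η).cexp
    rw [logDeriv_mul (f := fun z ↦ exp (η * z)) z (exp_ne_zero _) (sigma_ne_zero hz)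
      hexp.differentiableAt (L.differentiable_sigma z), logDeriv_apply, logDeriv_apply,
      deriv_comp_add_const, hexp.deriv, mul_div_cancel_left₀ _ (exp_ne_zero _), add_comm η]
    exact hη z hz
  obtain ⟨C, hC, hsigma⟩ := (logDeriv_eqOn_iff (Differentiable.differentiableOn (by fun_prop))
    (Differentiable.differentiableOn (by fun_prop)) L.isOpen_compl_lattice
    L.isPreconnected_compl_lattice (fun z hz ↦ mul_ne_zero (exp_ne_zero _) (sigma_ne_zero hz))
    fun z hz ↦ sigma_ne_zero (add_notMem_lattice hw hz)).mp hlog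
  refine ⟨η, C, hC, fun z ↦ ?_⟩
  by_cases hz : z ∈ L.lattice
  · rw [sigma_eq_zero_iff.mpr hz, sigma_eq_zero_iff.mpr (add_mem hz hw), mul_zero]
  · simpa [mul_assoc] using hsigma hz

lemma deriv_sigma_ne_zero (hw : w ∈ L.lattice) : deriv L.sigma w ≠ 0 := by
  obtain ⟨η, C, hC, hsigma⟩ := exists_sigma_add_eq hw
  have hexp : DifferentiableAt ℂ (fun z ↦ C * exp (η * z)) 0 := by fun_prop
  have hderiv : deriv L.sigma w = deriv (fun z ↦ C * exp (η * z) * L.sigma z) 0 := by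
    rw [← funext hsigma, deriv_comp_add_const, zero_add]
  rw [hderiv, deriv_fun_mul hexp (L.differentiable_sigma 0), deriv_sigma_zero]
  simpa using hC

variable (L)

/-- The product `σ(a + b) σ(a - b)`, in terms of which Weierstrass' three-term identity is the
Plücker relation `[a b][c d] + [a c][d b] + [a d][b c] = 0`. -/
def sigmaPair (a b : ℂ) : ℂ := L.sigma (a + b) * L.sigma (a - b)

@[fun_prop]
lemma differentiable_sigmaPair (hf : Differentiable ℂ f) (hg : Differentiable ℂ g) :
    Differentiable ℂ fun z ↦ L.sigmaPair (f z) (g z) := by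
  unfold sigmaPair
  fun_prop

@[simp]
lemma sigmaPair_self (a : ℂ) : L.sigmaPair a a = 0 := by simp [sigmaPair]

lemma sigmaPair_swap (a b : ℂ) : L.sigmaPair b a = -L.sigmaPair a b := by
  rw [sigmaPair, sigmaPair, add_comm, sigma_sub_rev, mul_neg]

lemma sigmaPair_neg_left (a b : ℂ) : L.sigmaPair (-a) b = L.sigmaPair a b := by
  rw [sigmaPair, sigmaPair, ← neg_add', sigma_neg, neg_add_eq_sub, L.sigma_sub_rev b a]
  ring

variable {L}

/- The multiplier does not depend on `a`: the two exponential factors depending on `a` cancel. -/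
lemma exists_sigmaPair_add_eq (hw : w ∈ L.lattice) :
    ∃ m : ℂ → ℂ, ∀ z a, L.sigmaPair (z + w) a = m z * L.sigmaPair z a := by
  obtain ⟨η, C, -, hsigma⟩ := exists_sigma_add_eq hw
  refine ⟨fun z ↦ C ^ 2 * exp (2 * (η * z)), fun z a ↦ ?_⟩
  have hexp : exp (2 * (η * z)) = exp (η * (z + a)) * exp (η * (z - a)) := by
    rw [← exp_add]
    ring_nf
  rw [sigmaPair, sigmaPair, add_right_comm, add_sub_right_comm, hsigma, hsigma]
  linear_combination -C ^ 2 * L.sigma (z + a) * L.sigma (z - a) * hexp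

lemma exists_eq_const_of_periodic (hf : Differentiable ℂ f)
    (hper : ∀ z, ∀ w ∈ L.lattice, f (z + w) = f z) : ∃ c, ∀ z, f z = c :=
  ⟨f 0, fun z ↦ hf.apply_eq_apply_of_bounded
    (IsZLattice.isCompact_range_of_periodic L.lattice f hf.continuous hper).isBounded z 0⟩

lemma exists_eq_const_mul_of_multiplier (hg : Differentiable ℂ g) (hq : Differentiable ℂ q)
    (hfg : ∀ z, f z = q z * g z)
    (hmul : ∀ w ∈ L.lattice, ∃ m : ℂ → ℂ, ∀ z, f (z + w) = m z * f z ∧ g (z + w) = m z * g z) :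
    ∃ c, ∀ z, f z = c * g z := by
  by_cases hg0 : ∀ z, g z = 0
  · exact ⟨0, fun z ↦ by simp [hfg, hg0]⟩
  obtain ⟨c, hc⟩ := exists_eq_const_of_periodic (L := L) hq fun z w hw ↦ by
    obtain ⟨m, hm⟩ := hmul w hw
    have hprod (u : ℂ) : (q (u + w) - q u) * g (u + w) = 0 := by
      linear_combination -hfg (u + w) + (hm u).1 + m u * hfg u - q u * (hm u).2
    refine sub_eq_zero.mp <| (eq_zero_or_eq_zero_of_differentiable_mul_eq_zero
      (f := fun u ↦ q (u + w) - q u) (g := fun u ↦ g (u + w))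
      (by fun_prop) (by fun_prop) hprod).resolve_right (fun h ↦ hg0 fun u ↦ ?_) z
    simpa using h (u - w)
  exact ⟨c, fun z ↦ by rw [hfg, hc]⟩

lemma exists_eq_mul_sigma (hf : Differentiable ℂ f) (hzero : ∀ w ∈ L.lattice, f w = 0) :
    ∃ q : ℂ → ℂ, Differentiable ℂ q ∧ ∀ z, f z = q z * L.sigma z :=
  exists_differentiable_eq_mul_of_simple_zeros hf L.differentiable_sigma fun p hp ↦
    have hp := sigma_eq_zero_iff.mp hp
    ⟨hzero p hp, deriv_sigma_ne_zero hp⟩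

lemma exists_eq_mul_sigmaPair {d : ℂ} (hd : 2 * d ∉ L.lattice)
    (hf : Differentiable ℂ f) (hadd : ∀ w ∈ L.lattice, f (w + d) = 0)
    (hsub : ∀ w ∈ L.lattice, f (w - d) = 0) :
    ∃ q : ℂ → ℂ, Differentiable ℂ q ∧ ∀ z, f z = q z * L.sigmaPair z d := by
  obtain ⟨q₁, hq₁, hfq₁⟩ := exists_eq_mul_sigma (f := fun z ↦ f (z + d)) (by fun_prop) hadd
  have q₁_zero : ∀ w ∈ L.lattice, q₁ (w - 2 * d) = 0 := by
    intro w hw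
    have hne : L.sigma (w - 2 * d) ≠ 0 := sigma_ne_zero fun h ↦
      hd (by simpa using sub_mem hw h)
    refine (mul_eq_zero_iff_right hne).mp ?_
    rw [← hfq₁, ← hsub w hw]
    ring_nf
  obtain ⟨q₂, hq₂, hq₁q₂⟩ := exists_eq_mul_sigma (f := fun z ↦ q₁ (z - 2 * d)) (by fun_prop) q₁_zero
  refine ⟨fun z ↦ q₂ (z + d), by fun_prop, fun z ↦ ?_⟩
  have hf_eq := hfq₁ (z - d)
  have hq₁_eq := hq₁q₂ (z + d)
  rw [sub_add_cancel] at hf_eq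
  rw [show z + d - 2 * d = z - d by ring] at hq₁_eq
  rw [hf_eq, hq₁_eq, mul_assoc, sigmaPair]

lemma sigmaPair_three_term_of_ne_zero {b d : ℂ} (hd : 2 * d ∉ L.lattice)
    (hbd : L.sigmaPair b d ≠ 0) (a c : ℂ) :
    L.sigmaPair a b * L.sigmaPair c d + L.sigmaPair a c * L.sigmaPair d b +
      L.sigmaPair a d * L.sigmaPair b c = 0 := by
  set F : ℂ → ℂ := fun z ↦ L.sigmaPair z b * L.sigmaPair c d + L.sigmaPair z c * L.sigmaPair d b +
    L.sigmaPair z d * L.sigmaPair b c with hF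
  have F_add : ∀ w ∈ L.lattice, ∃ m : ℂ → ℂ, ∀ z,
      F (z + w) = m z * F z ∧ L.sigmaPair (z + w) d = m z * L.sigmaPair z d := by
    intro w hw
    obtain ⟨m, hm⟩ := exists_sigmaPair_add_eq hw
    exact ⟨m, fun z ↦ ⟨by simp only [hF, hm]; ring, hm z d⟩⟩
  have F_add_zero {p : ℂ} (hp : F p = 0) : ∀ w ∈ L.lattice, F (w + p) = 0 := by
    intro w hw
    obtain ⟨m, hm⟩ := F_add w hw
    rw [add_comm, (hm p).1, hp, mul_zero]
  have F_d : F d = 0 := by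
    simp only [hF, sigmaPair_self, L.sigmaPair_swap c d]
    ring
  have F_neg_d : F (-d) = 0 := by simpa only [hF, sigmaPair_neg_left] using F_d
  have F_b : F b = 0 := by
    simp only [hF, sigmaPair_self, L.sigmaPair_swap b d]
    ring
  obtain ⟨q, hq, hFq⟩ := exists_eq_mul_sigmaPair hd (by fun_prop) (F_add_zero F_d)
    (by simpa only [sub_eq_add_neg] using F_add_zero F_neg_d)
  obtain ⟨k, hk⟩ := exists_eq_const_mul_of_multiplier (by fun_prop) hq hFq F_add
  have hk0 : k = 0 := (mul_eq_zero_iff_right hbd).mp ((hk b).symm.trans F_b)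
  exact (hk a).trans (by rw [hk0, zero_mul])

variable (L)

lemma exists_sigma_ne_zero : ∃ z, L.sigma z ≠ 0 :=
  ⟨_, sigma_ne_zero L.toPeriodPair.ω₁_div_two_notMem_lattice⟩

lemma sigmaPair_three_term (a b c d : ℂ) :
    L.sigmaPair a b * L.sigmaPair c d + L.sigmaPair a c * L.sigmaPair d b +
      L.sigmaPair a d * L.sigmaPair b c = 0 := by
  have hprod (d : ℂ) : (L.sigmaPair a b * L.sigmaPair c d + L.sigmaPair a c * L.sigmaPair d b +
      L.sigmaPair a d * L.sigmaPair b c) * (L.sigma (2 * d) * L.sigmaPair b d) = 0 := by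
    simp only [mul_eq_zero (b := _ * _), mul_eq_zero (a := L.sigma _), sigma_eq_zero_iff]
    by_contra! h
    exact h.1 (sigmaPair_three_term_of_ne_zero h.2.1 h.2.2 a c)
  refine (eq_zero_or_eq_zero_of_differentiable_mul_eq_zero (by fun_prop) (by fun_prop)
    hprod).resolve_right (fun h ↦ ?_) d
  obtain ⟨z₀, hz₀⟩ := L.exists_sigma_ne_zero
  rcases eq_zero_or_eq_zero_of_differentiable_mul_eq_zero (by fun_prop) (by fun_prop) h with h | h
  · exact hz₀ (by simpa only [mul_div_cancel₀ z₀ (two_ne_zero' ℂ)] using h (z₀ / 2))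
  rcases eq_zero_or_eq_zero_of_differentiable_mul_eq_zero (by fun_prop) (by fun_prop) h with h | h
  · exact hz₀ (by simpa using h (z₀ - b))
  · exact hz₀ (by simpa using h (b - z₀))

lemma sigma_three_term (ξ δ κ μ : ℂ) :
    L.sigma (ξ + κ) * L.sigma (ξ + δ) * (L.sigma (δ + μ) * L.sigma (μ - κ)) +
      L.sigma (ξ + δ + μ) * L.sigma (ξ + κ - μ) * (L.sigma κ * L.sigma δ) -
      L.sigma (ξ + δ + κ) * L.sigma ξ * (L.sigma μ * L.sigma (δ + μ - κ)) = 0 := by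
  have hthree :=
    L.sigmaPair_three_term (ξ + (κ + δ) / 2) ((κ - δ) / 2) (μ + (δ - κ) / 2) ((κ + δ) / 2)
  have hneg : L.sigma ((κ - δ) / 2 - (μ + (δ - κ) / 2)) = -L.sigma (δ + μ - κ) := by
    rw [← sigma_neg]
    ring_nf
  simp only [sigmaPair, hneg] at hthree
  convert hthree using 1
  ring_nf

variable {L}

lemma Phi_mul_Phi {ξ δ κ μ : ℂ} (hξ : ξ ∉ L.lattice) (hδ : δ ∉ L.lattice) (hκ : κ ∉ L.lattice)
    (hμ : μ ∉ L.lattice) (hξδ : ξ + δ ∉ L.lattice) (hκμ : κ - μ ∉ L.lattice) :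
    L.Phi ξ κ * L.Phi δ μ =
      L.Phi (ξ + δ) κ * L.Phi δ (μ - κ) + L.Phi ξ (κ - μ) * L.Phi (ξ + δ) μ := by
  have hμκ : L.sigma (μ - κ) ≠ 0 := by
    rw [sigma_sub_rev]
    exact neg_ne_zero.mpr (sigma_ne_zero hκμ)
  replace hξ := sigma_ne_zero hξ
  replace hδ := sigma_ne_zero hδ
  replace hκ := sigma_ne_zero hκ
  replace hμ := sigma_ne_zero hμ
  replace hξδ := sigma_ne_zero hξδ
  simp only [Phi, L.sigma_sub_rev κ μ, ← add_sub_assoc]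
  field_simp
  linear_combination L.sigma_three_term ξ δ κ μ

end EllLattice

/-- The addition formula for the Lamé function:
`Ψ_ξ(κ)Ψ_δ(λ) = e^{η_δ(ξ)κ} Ψ_{ξ+δ}(κ) Ψ_δ(λ−κ) + e^{η_δ(ξ)λ} Ψ_ξ(κ−λ) Ψ_{ξ+δ}(λ)`. -/
theorem Psi_addition_formula (L : EllLattice) (ξ δ κ lam : ℂ)
    (h1 : ¬ L.mem ξ) (h2 : ¬ L.mem δ) (h3 : ¬ L.mem κ) (h4 : ¬ L.mem lam)
    (h5 : ¬ L.mem (ξ + δ)) (h6 : ¬ L.mem (κ - lam)) (h7 : ¬ L.mem (lam - κ))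
    (h8 : ¬ L.mem (ξ + κ)) (h9 : ¬ L.mem (δ + lam)) (h10 : ¬ L.mem (ξ + δ + κ))
    (h11 : ¬ L.mem (ξ + δ + lam)) (h12 : ¬ L.mem (ξ + κ - lam))
    (h13 : ¬ L.mem (δ + lam - κ)) :
    L.Psi ξ κ * L.Psi δ lam =
      Complex.exp (L.eta δ ξ * κ) * L.Psi (ξ + δ) κ * L.Psi δ (lam - κ) +
      Complex.exp (L.eta δ ξ * lam) * L.Psi ξ (κ - lam) * L.Psi (ξ + δ) lam := by
  simp only [← EllLattice.mem_lattice_iff] at h1 h2 h3 h4 h5 h6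
  have exp_first_term : exp (L.eta δ ξ * κ) * exp (-L.zeta (ξ + δ) * κ) *
      exp (-L.zeta δ * (lam - κ)) = exp (-L.zeta ξ * κ) * exp (-L.zeta δ * lam) := by
    simp only [← exp_add, EllLattice.eta]
    ring_nf
  have exp_second_term : exp (L.eta δ ξ * lam) * exp (-L.zeta ξ * (κ - lam)) *
      exp (-L.zeta (ξ + δ) * lam) = exp (-L.zeta ξ * κ) * exp (-L.zeta δ * lam) := by
    simp only [← exp_add, EllLattice.eta]
    ring_nf
  simp only [EllLattice.Psi]
  linear_combination (exp (-L.zeta ξ * κ) * exp (-L.zeta δ * lam)) *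
      EllLattice.Phi_mul_Phi h1 h2 h3 h4 h5 h6
    - L.Phi (ξ + δ) κ * L.Phi δ (lam - κ) * exp_first_term
    - L.Phi ξ (κ - lam) * L.Phi (ξ + δ) lam * exp_second_term
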